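/- Let g be a symmetric positive definite real d×d matrix with inner product g(X,Y) = Xᵀ g Y, let J be any real d×d matrix, set 𝐁 = g⁻¹(Jᵀ − J), and define the bilinear form Φ on ℝ^d × ℝ^d by Φ((Q,P),(Q',P')) = 2⟨g⁻¹(P − JQ), P' − JQ'⟩. Let β_1, …, β_s > 0 and let u_1, v_1, …, u_s, v_s ∈ ℝ^d be a g-orthonormal family satisfying 𝐁u_i = −β_i v_i and 𝐁v_i = β_i u_i, and set f_i = β_i^{-1/2}(u_i, Jᵀu_i), f'_i = β_i^{-1/2}(v_i, Jᵀv_i) ∈ ℝ^{2d}. Then for all 1 ≤ i,j ≤ s: Φ(f_i, f_j) = 2β_i δ_{ij}, Φ(f'_i, f'_j) = 2β_i δ_{ij}, and Φ(f_i, f'_j) = 0. -/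

import Mathlib

open Matrix

noncomputable section

/-- The Hessian bilinear form of the magnetic Hamiltonian at a point of its zero set:
`Φ((Q,P),(Q',P')) = 2⟨g⁻¹(P − JQ), P' − JQ'⟩`. -/
def hessH {d : ℕ} (g J : Matrix (Fin d) (Fin d) ℝ)
    (p p' : (Fin d → ℝ) × (Fin d → ℝ)) : ℝ :=
  2 * ((g⁻¹ *ᵥ (p.2 - J *ᵥ p.1)) ⬝ᵥ (p'.2 - J *ᵥ p'.1))

/-!
Put `𝐁 = g⁻¹(Jᵀ − J)`. On the subspace `P = Jᵀ Q` one has `P − J Q = (Jᵀ − J) Q = g 𝐁 Q`, so there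
`Φ` is twice the pullback of the metric `g` by `𝐁`. Since `𝐁` sends `u_i` to `β_i (-v_i)` and `v_i`
to `β_i u_i`, it maps the frame rescaled by `β_i^{-1/2}` to a `g`-orthonormal family rescaled by
`β_i^{1/2}`.
-/

section

variable {d : ℕ} {g J : Matrix (Fin d) (Fin d) ℝ}

theorem hessH_smul_smul (a b : ℝ) (p p' : (Fin d → ℝ) × (Fin d → ℝ)) :
    hessH g J (a • p) (b • p') = a * b * hessH g J p p' := by
  simp only [hessH, Prod.smul_fst, Prod.smul_snd, mulVec_smul, ← smul_sub, smul_dotProduct,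
    dotProduct_smul, smul_eq_mul]
  ring

theorem hessH_transpose_mulVec (hg : IsUnit g.det) (x y : Fin d → ℝ) :
    hessH g J (x, Jᵀ *ᵥ x) (y, Jᵀ *ᵥ y) =
      2 * (((g⁻¹ * (Jᵀ - J)) *ᵥ x) ⬝ᵥ (g *ᵥ ((g⁻¹ * (Jᵀ - J)) *ᵥ y))) := by
  have hgB : g *ᵥ ((g⁻¹ * (Jᵀ - J)) *ᵥ y) = (Jᵀ - J) *ᵥ y := by
    rw [mulVec_mulVec, mul_nonsing_inv_cancel_left _ _ hg]
  rw [hgB, hessH, ← sub_mulVec, ← sub_mulVec, mulVec_mulVec]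

theorem hessH_inv_sqrt_smul (hg : IsUnit g.det) {b c : ℝ} {x y x' y' : Fin d → ℝ}
    (hx : (g⁻¹ * (Jᵀ - J)) *ᵥ x = b • x') (hy : (g⁻¹ * (Jᵀ - J)) *ᵥ y = c • y') :
    hessH g J ((√b)⁻¹ • (x, Jᵀ *ᵥ x)) ((√c)⁻¹ • (y, Jᵀ *ᵥ y)) =
      2 * (√b * √c) * (x' ⬝ᵥ (g *ᵥ y')) :=
  calc hessH g J ((√b)⁻¹ • (x, Jᵀ *ᵥ x)) ((√c)⁻¹ • (y, Jᵀ *ᵥ y))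
      = 2 * ((b / √b) * (c / √c)) * (x' ⬝ᵥ (g *ᵥ y')) := by
        rw [hessH_smul_smul, hessH_transpose_mulVec hg, hx, hy, mulVec_smul, smul_dotProduct,
          dotProduct_smul, smul_eq_mul, smul_eq_mul]
        ring
    _ = 2 * (√b * √c) * (x' ⬝ᵥ (g *ᵥ y')) := by rw [Real.div_sqrt, Real.div_sqrt]

end

theorem sqrt_mul_sqrt_mul_ite {ι : Type*} [DecidableEq ι] {β : ι → ℝ} {i : ι}
    (hβ : 0 ≤ β i) (j : ι) :
    2 * (√(β i) * √(β j)) * (if i = j then 1 else 0) = if i = j then 2 * β i else 0 := by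
  split_ifs with hij
  · rw [← hij, Real.mul_self_sqrt hβ, mul_one]
  · rw [mul_zero]

theorem hessian_diagonal_in_symplectic_frame_general {d : ℕ} {ι : Type*} [DecidableEq ι]
    (g J : Matrix (Fin d) (Fin d) ℝ)
    (hgs : g.IsSymm) (hg : IsUnit g.det)
    (β : ι → ℝ) (hβ : ∀ i, 0 < β i)
    (u v : ι → (Fin d → ℝ))
    (huu : ∀ i j, u i ⬝ᵥ (g *ᵥ u j) = if i = j then 1 else 0)
    (hvv : ∀ i j, v i ⬝ᵥ (g *ᵥ v j) = if i = j then 1 else 0)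
    (huv : ∀ i j, u i ⬝ᵥ (g *ᵥ v j) = 0)
    (hBu : ∀ i, (g⁻¹ * (Jᵀ - J)) *ᵥ u i = (-(β i)) • v i)
    (hBv : ∀ i, (g⁻¹ * (Jᵀ - J)) *ᵥ v i = (β i) • u i)
    (f f' : ι → (Fin d → ℝ) × (Fin d → ℝ))
    (hf : ∀ i, f i = (√(β i))⁻¹ • ((u i, Jᵀ *ᵥ u i) : (Fin d → ℝ) × (Fin d → ℝ)))
    (hf' : ∀ i, f' i = (√(β i))⁻¹ • ((v i, Jᵀ *ᵥ v i) : (Fin d → ℝ) × (Fin d → ℝ))) :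
    (∀ i j, hessH g J (f i) (f j) = if i = j then 2 * β i else 0) ∧
    (∀ i j, hessH g J (f' i) (f' j) = if i = j then 2 * β i else 0) ∧
    (∀ i j, hessH g J (f i) (f' j) = 0) := by
  have hBu' (i : ι) : (g⁻¹ * (Jᵀ - J)) *ᵥ u i = β i • -v i := by rw [hBu, neg_smul, smul_neg]
  have hvu (i j : ι) : v i ⬝ᵥ (g *ᵥ u j) = 0 := by
    rw [← hgs.eq, dotProduct_transpose_mulVec, huv]
  refine ⟨fun i j => ?_, fun i j => ?_, fun i j => ?_⟩
  · rw [hf, hf, hessH_inv_sqrt_smul hg (hBu' i) (hBu' j), mulVec_neg, neg_dotProduct_neg, hvv,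
      sqrt_mul_sqrt_mul_ite (hβ i).le]
  · rw [hf', hf', hessH_inv_sqrt_smul hg (hBv i) (hBv j), huu,
      sqrt_mul_sqrt_mul_ite (hβ i).le]
  · rw [hf, hf', hessH_inv_sqrt_smul hg (hBu' i) (hBv j), neg_dotProduct, hvu, neg_zero, mul_zero]

/-- In the symplectic frame `(f_i, f'_i)` built from a `g`-orthonormal eigenframe of
`𝐁 = g⁻¹(Jᵀ − J)`, the Hessian `Φ` of the magnetic Hamiltonian is the diagonal
matrix `diag(2β_1, 2β_1, …, 2β_s, 2β_s)`. -/
theorem hessian_diagonal_in_symplectic_frame {d s : ℕ}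
    (g J : Matrix (Fin d) (Fin d) ℝ)
    (hgs : g.IsSymm) (hgpd : g.PosDef)
    (β : Fin s → ℝ) (hβ : ∀ i, 0 < β i)
    (u v : Fin s → (Fin d → ℝ))
    (huu : ∀ i j, u i ⬝ᵥ (g *ᵥ u j) = if i = j then 1 else 0)
    (hvv : ∀ i j, v i ⬝ᵥ (g *ᵥ v j) = if i = j then 1 else 0)
    (huv : ∀ i j, u i ⬝ᵥ (g *ᵥ v j) = 0)
    (hBu : ∀ i, (g⁻¹ * (Jᵀ - J)) *ᵥ u i = (-(β i)) • v i)
    (hBv : ∀ i, (g⁻¹ * (Jᵀ - J)) *ᵥ v i = (β i) • u i)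
    (f f' : Fin s → (Fin d → ℝ) × (Fin d → ℝ))
    (hf : ∀ i, f i = (Real.sqrt (β i))⁻¹ • ((u i, Jᵀ *ᵥ u i) : (Fin d → ℝ) × (Fin d → ℝ)))
    (hf' : ∀ i, f' i = (Real.sqrt (β i))⁻¹ • ((v i, Jᵀ *ᵥ v i) : (Fin d → ℝ) × (Fin d → ℝ))) :
    (∀ i j, hessH g J (f i) (f j) = if i = j then 2 * β i else 0) ∧
    (∀ i j, hessH g J (f' i) (f' j) = if i = j then 2 * β i else 0) ∧
    (∀ i j, hessH g J (f i) (f' j) = 0) :=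
  hessian_diagonal_in_symplectic_frame_general g J hgs
    ((isUnit_iff_isUnit_det g).1 hgpd.isUnit) β hβ u v huu hvv huv hBu hBv f f' hf hf'
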